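/- Let μ be a probability measure on Γ = {0,1}^𝔛, let x, y ∈ 𝔛 be distinct with σ_{x,y}(μ) and μ mutually absolutely continuous, φ(·,x,y) := dσ_{x,y}(μ)/dμ, and let c : Γ → [0,∞) be measurable. Then the measure c·μ is invariant under σ_{x,y} if and only if there exists a measurable a : Γ → [0,∞) with a(σ_{x,y}(γ)) = a(γ) for μ-a.e. γ such that c(γ) = φ(γ,x,y)^{1/2} a(γ) for μ-a.e. γ. Moreover, in that case one may take a = c · φ(·,x,y)^{−1/2}. -/

import Mathlib

/-!
Write `T` for the transposition acting on configurations, an involution, and `φ = d(T_* μ)/dμ`.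
Since `T` is an involution, `T_* (f·μ) = (f ∘ T)·T_* μ = (φ · (f ∘ T))·μ` for every density `f`.
Two instances of this identity carry the proof, by uniqueness of densities:

* `f = φ`: since `T_* (φ·μ) = T_* T_* μ = μ`, the cocycle identity `φ · (φ ∘ T) = 1` holds a.e.;
* `f = c`: the measure `c·μ` is invariant iff `φ · (c ∘ T) = c` a.e.

Given the cocycle identity, `φ · (c ∘ T) = c` says exactly that `c / √φ` is `T`-invariant.
Almost-everywhere statements can be composed with `T` because `T_* μ ≪ μ`.
-/

open MeasureTheory

/-- The action of the transposition `σ_{x,y}` on configurations `γ : 𝔛 → Bool`. -/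
def swapT {𝔛 : Type*} [DecidableEq 𝔛] (x y : 𝔛) (γ : 𝔛 → Bool) : 𝔛 → Bool :=
  fun t => γ (Equiv.swap x y t)

/-- The Radon–Nikodým derivative `φ(γ,x,y) = dσ_{x,y}(μ)/dμ (γ)`, as a real-valued function. -/
noncomputable def rnd {𝔛 : Type*} [DecidableEq 𝔛] (μ : Measure (𝔛 → Bool)) (x y : 𝔛)
    (γ : 𝔛 → Bool) : ℝ :=
  ((μ.map (swapT x y)).rnDeriv μ γ).toReal

section Helpers

variable {𝔛 : Type*} [DecidableEq 𝔛]

theorem swapT_swapT (x y : 𝔛) (γ : 𝔛 → Bool) : swapT x y (swapT x y γ) = γ := by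
  funext t
  simp [swapT]

theorem measurable_swapT (x y : 𝔛) : Measurable (swapT x y) :=
  measurable_pi_lambda _ fun _ => measurable_pi_apply _

theorem map_swapT_map_swapT (μ : Measure (𝔛 → Bool)) (x y : 𝔛) :
    (μ.map (swapT x y)).map (swapT x y) = μ := by
  rw [Measure.map_map (measurable_swapT x y) (measurable_swapT x y)]
  have h : swapT x y ∘ swapT x y = id := funext (swapT_swapT x y)
  rw [h, Measure.map_id]

/-- Transport of a density: `T_* (f·μ) = (φ · (f ∘ T))·μ`. -/
theorem map_swapT_withDensity (μ : Measure (𝔛 → Bool)) [IsProbabilityMeasure μ] (x y : 𝔛)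
    (hac : μ.map (swapT x y) ≪ μ) {f : (𝔛 → Bool) → ENNReal} (hf : Measurable f) :
    (μ.withDensity f).map (swapT x y)
      = μ.withDensity ((μ.map (swapT x y)).rnDeriv μ * (f ∘ swapT x y)) := by
  have hT := measurable_swapT x y
  have : IsProbabilityMeasure (μ.map (swapT x y)) := Measure.isProbabilityMeasure_map hT.aemeasurable
  rw [withDensity_mul _ (Measure.measurable_rnDeriv _ _) (hf.comp hT),
    Measure.withDensity_rnDeriv_eq _ _ hac]
  ext s hs
  rw [Measure.map_apply hT hs, withDensity_apply _ (hT hs), withDensity_apply _ hs,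
    setLIntegral_map hs (hf.comp hT) hT]
  simp only [Function.comp_apply, swapT_swapT]

theorem ofReal_rnd_ae (μ : Measure (𝔛 → Bool)) [IsProbabilityMeasure μ] (x y : 𝔛) :
    ∀ᵐ γ ∂μ, (μ.map (swapT x y)).rnDeriv μ γ = ENNReal.ofReal (rnd μ x y γ) := by
  have : IsProbabilityMeasure (μ.map (swapT x y)) :=
    Measure.isProbabilityMeasure_map (measurable_swapT x y).aemeasurable
  filter_upwards [Measure.rnDeriv_lt_top (μ.map (swapT x y)) μ] with γ h
  exact (ENNReal.ofReal_toReal h.ne).symm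

theorem measurable_rnd (μ : Measure (𝔛 → Bool)) (x y : 𝔛) : Measurable (rnd μ x y) :=
  (Measure.measurable_rnDeriv _ _).ennreal_toReal

theorem rnd_nonneg (μ : Measure (𝔛 → Bool)) (x y : 𝔛) (γ : 𝔛 → Bool) : 0 ≤ rnd μ x y γ :=
  ENNReal.toReal_nonneg

theorem ae_comp_swapT {μ : Measure (𝔛 → Bool)} {x y : 𝔛} (hac : μ.map (swapT x y) ≪ μ)
    {p : (𝔛 → Bool) → Prop} (h : ∀ᵐ γ ∂μ, p γ) : ∀ᵐ γ ∂μ, p (swapT x y γ) :=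
  ae_of_ae_map (measurable_swapT x y).aemeasurable (hac.ae_le h)

/-- Cocycle identity for the Radon–Nikodým derivative along an involution. -/
theorem rnd_mul_rnd_swapT (μ : Measure (𝔛 → Bool)) [IsProbabilityMeasure μ] (x y : 𝔛)
    (hac : μ.map (swapT x y) ≪ μ) :
    ∀ᵐ γ ∂μ, rnd μ x y γ * rnd μ x y (swapT x y γ) = 1 := by
  have hT := measurable_swapT x y
  have : IsProbabilityMeasure (μ.map (swapT x y)) := Measure.isProbabilityMeasure_map hT.aemeasurable
  have hm := Measure.measurable_rnDeriv (μ.map (swapT x y)) μ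
  have h := map_swapT_withDensity μ x y hac hm
  rw [Measure.withDensity_rnDeriv_eq _ _ hac, map_swapT_map_swapT] at h
  have h1 : μ.withDensity 1
      = μ.withDensity ((μ.map (swapT x y)).rnDeriv μ * ((μ.map (swapT x y)).rnDeriv μ ∘ swapT x y)) := by
    rw [withDensity_one]
    exact h
  rw [withDensity_eq_iff_of_sigmaFinite measurable_one.aemeasurable
    (hm.mul (hm.comp hT)).aemeasurable] at h1
  filter_upwards [h1] with γ h2
  simpa [rnd] using (congrArg ENNReal.toReal h2).symm

/-- Invariance of `c·μ` under the transposition, expressed through densities. -/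
theorem map_withDensity_eq_iff (μ : Measure (𝔛 → Bool)) [IsProbabilityMeasure μ] (x y : 𝔛)
    (hac : μ.map (swapT x y) ≪ μ) (c : (𝔛 → Bool) → ℝ) (hc : Measurable c)
    (hc0 : ∀ γ, 0 ≤ c γ) :
    (μ.withDensity (fun γ => ENNReal.ofReal (c γ))).map (swapT x y)
        = μ.withDensity (fun γ => ENNReal.ofReal (c γ))
      ↔ ∀ᵐ γ ∂μ, rnd μ x y γ * c (swapT x y γ) = c γ := by
  have hT := measurable_swapT x y
  have hm := Measure.measurable_rnDeriv (μ.map (swapT x y)) μ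
  rw [map_swapT_withDensity μ x y hac hc.ennreal_ofReal,
    withDensity_eq_iff_of_sigmaFinite (hm.mul (hc.ennreal_ofReal.comp hT)).aemeasurable
      hc.ennreal_ofReal.aemeasurable]
  refine Filter.eventually_congr ?_
  filter_upwards [ofReal_rnd_ae μ x y] with γ h
  rw [Pi.mul_apply, h, Function.comp_apply, ← ENNReal.ofReal_mul (rnd_nonneg μ x y γ),
    ENNReal.ofReal_eq_ofReal_iff (mul_nonneg (rnd_nonneg μ x y γ) (hc0 _)) (hc0 _)]

end Helpers

/-- For distinct `x,y` with `σ_{x,y}(μ)` and `μ` mutually absolutely continuous, and measurable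
`c : Γ → [0,∞)`: the measure `c·μ` is invariant under `σ_{x,y}` iff
`c = φ^{1/2}·a` `μ`-a.e. for some measurable `a ≥ 0` with `a ∘ σ_{x,y} = a` `μ`-a.e.;
moreover, in that case one may take `a = c·φ^{-1/2}`. -/
theorem withDensity_swap_invariant_iff_factorization
    {𝔛 : Type*} [Countable 𝔛] [DecidableEq 𝔛]
    (μ : Measure (𝔛 → Bool)) [IsProbabilityMeasure μ]
    (x y : 𝔛) (hxy : x ≠ y)
    (hac : μ.map (swapT x y) ≪ μ) (hac' : μ ≪ μ.map (swapT x y))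
    (c : (𝔛 → Bool) → ℝ) (hc : Measurable c) (hc0 : ∀ γ, 0 ≤ c γ) :
    ((μ.withDensity (fun γ => ENNReal.ofReal (c γ))).map (swapT x y)
          = μ.withDensity (fun γ => ENNReal.ofReal (c γ))
        ↔ ∃ a : (𝔛 → Bool) → ℝ, Measurable a ∧ (∀ γ, 0 ≤ a γ) ∧
            (∀ᵐ γ ∂μ, a (swapT x y γ) = a γ) ∧
            (∀ᵐ γ ∂μ, c γ = Real.sqrt (rnd μ x y γ) * a γ))
      ∧ ((μ.withDensity (fun γ => ENNReal.ofReal (c γ))).map (swapT x y)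
          = μ.withDensity (fun γ => ENNReal.ofReal (c γ)) →
          (∀ᵐ γ ∂μ, c (swapT x y γ) / Real.sqrt (rnd μ x y (swapT x y γ))
              = c γ / Real.sqrt (rnd μ x y γ)) ∧
          (∀ᵐ γ ∂μ, c γ = Real.sqrt (rnd μ x y γ) * (c γ / Real.sqrt (rnd μ x y γ)))) := by
  have hcoc := rnd_mul_rnd_swapT μ x y hac
  have key : (μ.withDensity (fun γ => ENNReal.ofReal (c γ))).map (swapT x y)
          = μ.withDensity (fun γ => ENNReal.ofReal (c γ)) →
          (∀ᵐ γ ∂μ, c (swapT x y γ) / Real.sqrt (rnd μ x y (swapT x y γ))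
              = c γ / Real.sqrt (rnd μ x y γ)) ∧
          (∀ᵐ γ ∂μ, c γ = Real.sqrt (rnd μ x y γ) * (c γ / Real.sqrt (rnd μ x y γ))) := by
    rw [map_withDensity_eq_iff μ x y hac c hc hc0]
    intro hinv
    constructor
    · filter_upwards [hinv, hcoc] with γ h1 h2
      have hs : 0 < Real.sqrt (rnd μ x y γ) :=
        Real.sqrt_pos.2 ((rnd_nonneg μ x y γ).lt_of_ne' (left_ne_zero_of_mul_eq_one h2))
      rw [eq_inv_of_mul_eq_one_right h2, Real.sqrt_inv, div_inv_eq_mul, eq_div_iff hs.ne',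
        mul_assoc, Real.mul_self_sqrt (rnd_nonneg μ x y γ), mul_comm, h1]
    · filter_upwards [hcoc] with γ h2
      have hs : 0 < Real.sqrt (rnd μ x y γ) :=
        Real.sqrt_pos.2 ((rnd_nonneg μ x y γ).lt_of_ne' (left_ne_zero_of_mul_eq_one h2))
      exact (mul_div_cancel₀ _ hs.ne').symm
  refine ⟨⟨fun h => ⟨fun γ => c γ / Real.sqrt (rnd μ x y γ),
    hc.div (measurable_rnd μ x y).sqrt, fun γ => div_nonneg (hc0 γ) (Real.sqrt_nonneg _),
    key h⟩, ?_⟩, key⟩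
  rintro ⟨a, -, -, hinv, hfac⟩
  rw [map_withDensity_eq_iff μ x y hac c hc hc0]
  filter_upwards [hinv, hfac, ae_comp_swapT hac hfac, hcoc] with γ h1 h2 h3 h4
  have hs : 0 < Real.sqrt (rnd μ x y γ) :=
    Real.sqrt_pos.2 ((rnd_nonneg μ x y γ).lt_of_ne' (left_ne_zero_of_mul_eq_one h4))
  rw [h3, h2, h1, eq_inv_of_mul_eq_one_right h4, Real.sqrt_inv, ← mul_assoc,
    ← div_eq_mul_inv, Real.div_sqrt]
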